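/- There exists a polynomial Q with natural-number coefficients such that for every 2-VASS V with n control states and norm M, every run ρ of V whose control states all lie within a single strongly connected component and which satisfies ‖trg(ρ)‖ > Q(nM)·(‖src(ρ)‖ + 1) contains a configuration that enables a semi-positive cycle of length at most Q(nM). -/

import Mathlib

/-- Integer vectors in the plane. -/
abbrev Vec2 : Type := ℤ × ℤ

/-- The norm of a vector: the maximum of the absolute values of its coordinates. -/
def vnorm (v : Vec2) : ℕ := max v.1.natAbs v.2.natAbs

/-- A vector is positive if both coordinates are positive. -/
def Pos (v : Vec2) : Prop := 0 < v.1 ∧ 0 < v.2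

/-- A vector is semi-positive if both coordinates are nonnegative and one is positive. -/
def SemiPos (v : Vec2) : Prop := 0 ≤ v.1 ∧ 0 ≤ v.2 ∧ (0 < v.1 ∨ 0 < v.2)

/-- A vector is vertical if it is of the form (0, a) with a > 0. -/
def Vert (v : Vec2) : Prop := v.1 = 0 ∧ 0 < v.2

/-- A vector is horizontal if it is of the form (a, 0) with a > 0. -/
def Horiz (v : Vec2) : Prop := 0 < v.1 ∧ v.2 = 0

/-- Embedding of integer vectors into the rational plane. -/
def toQ (v : Vec2) : ℚ × ℚ := ((v.1 : ℚ), (v.2 : ℚ))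

/-- The half-line (ray) ℚ≥0 · x generated by a rational vector x. -/
def rayQ (x : ℚ × ℚ) : Set (ℚ × ℚ) := {z | ∃ a : ℚ, 0 ≤ a ∧ z = a • x}

/-- The cone of a finite list of integer vectors: all nonnegative rational
linear combinations. -/
def Cone (vs : List Vec2) : Set (ℚ × ℚ) :=
  {x | ∃ a : Fin vs.length → ℚ, (∀ i, 0 ≤ a i) ∧ x = ∑ i, a i • toQ (vs.get i)}

/-- The sequential cone: nonnegative rational combinations all of whose
partial sums are in the nonnegative orthant. -/
def SeqCone (vs : List Vec2) : Set (ℚ × ℚ) :=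
  {x | ∃ a : Fin vs.length → ℚ, (∀ i, 0 ≤ a i) ∧
    (∀ k : ℕ, k ≤ vs.length →
      0 ≤ ∑ i : Fin vs.length, if (i : ℕ) < k then a i • toQ (vs.get i) else 0) ∧
    x = ∑ i, a i • toQ (vs.get i)}

/-- Two integer vectors are colinear if they generate the same half-line. -/
def Colinear (v w : Vec2) : Prop := rayQ (toQ v) = rayQ (toQ w)

/-- The clockwise relation on nonnegative vectors:
`Clk v u` iff u lies strictly clockwise from v. -/
def Clk (v u : Vec2) : Prop := 0 < v.2 * u.1 - v.1 * u.2

/-- Projection of a vector on coordinate `j` (`Fin 2` indexes the two coordinates). -/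
def proj (j : Fin 2) (v : Vec2) : ℤ := if j = 0 then v.1 else v.2

/-! ### 2-dimensional vector addition systems with states (2-VASS) -/

/-- A transition of a 2-VASS with control states `Fin n`:
a source state, an effect vector, and a target state. -/
abbrev Transition (n : ℕ) : Type := Fin n × Vec2 × Fin n

/-- A 2-VASS with control states `Fin n` is a finite set of transitions. -/
abbrev VASS (n : ℕ) : Type := Finset (Transition n)

/-- The norm of a 2-VASS: the largest norm of an effect of a transition. -/
def vassNorm {n : ℕ} (V : VASS n) : ℕ := V.sup (fun t => vnorm t.2.1)

/-- The effect of a sequence of transitions: the sum of the individual effects. -/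
def effect {n : ℕ} (π : List (Transition n)) : Vec2 := (π.map (fun t => t.2.1)).sum

/-- A path of `V`: a sequence of transitions of `V` in which
consecutive control states match. -/
def IsPath {n : ℕ} (V : VASS n) (π : List (Transition n)) : Prop :=
  (∀ t ∈ π, t ∈ V) ∧ π.Chain' (fun s t => s.2.2 = t.1)

/-- The path `π` starts at control state `q` (vacuously true for the empty path). -/
def startsAt {n : ℕ} (π : List (Transition n)) (q : Fin n) : Prop :=
  ∀ t ∈ π.head?, t.1 = q

/-- The control state after the first `i` transitions of `π`, for a path
starting at control state `q`. -/
def stateAt {n : ℕ} (π : List (Transition n)) (q : Fin n) (i : ℕ) : Fin n :=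
  (((π.take i).getLast?).map (fun t => t.2.2)).getD q

/-- The final control state of a path `π` starting at control state `q`. -/
def endState {n : ℕ} (π : List (Transition n)) (q : Fin n) : Fin n := stateAt π q π.length

/-- The counter values after the first `i` transitions of `π`, starting from
counter values `u`. -/
def vecAt {n : ℕ} (π : List (Transition n)) (u : Vec2) (i : ℕ) : Vec2 :=
  u + effect (π.take i)

/-- The path `π` is enabled in the configuration `(q, u)`: it starts at `q`
and all intermediate counter values are nonnegative. -/
def Enabled {n : ℕ} (π : List (Transition n)) (q : Fin n) (u : Vec2) : Prop :=
  startsAt π q ∧ ∀ i ≤ π.length, 0 ≤ vecAt π u i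

/-- For `j ∈ {1,2}`, the path `π` is `{j}`-enabled in the configuration `(q, u)`:
it starts at `q` and the `j`-th coordinate of all intermediate counter values is
nonnegative. -/
def JEnabled {n : ℕ} (π : List (Transition n)) (q : Fin n) (u : Vec2) (j : Fin 2) : Prop :=
  startsAt π q ∧ ∀ i ≤ π.length, 0 ≤ proj j (vecAt π u i)

/-- A run of `V`: a path of `V` enabled in the configuration `(q, u)`.
Its source is `(q, u)`, its target is `(endState π q, vecAt π u π.length)`,
and its configurations are `(stateAt π q i, vecAt π u i)` for `i ≤ π.length`. -/
def IsRun {n : ℕ} (V : VASS n) (π : List (Transition n)) (q : Fin n) (u : Vec2) : Prop :=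
  IsPath V π ∧ Enabled π q u

/-- A (0,0)-run of `V`: a run whose source and target counter values are `(0,0)`. -/
def IsZeroRun {n : ℕ} (V : VASS n) (π : List (Transition n)) (q : Fin n) : Prop :=
  IsRun V π q 0 ∧ effect π = 0

/-- A cycle of `V`: a nonempty path of `V` whose starting and ending control
states coincide. -/
def IsCycle {n : ℕ} (V : VASS n) (γ : List (Transition n)) : Prop :=
  IsPath V γ ∧ γ ≠ [] ∧ γ.head?.map (fun t => t.1) = γ.getLast?.map (fun t => t.2.2)

/-- Reachability in the directed graph of `V`: there is a path of `V`
from `p` to `q` (possibly empty). -/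
def Reach {n : ℕ} (V : VASS n) (p q : Fin n) : Prop :=
  ∃ π : List (Transition n), IsPath V π ∧ startsAt π p ∧ endState π p = q

/-- `S` is a strongly connected component of the directed graph of `V`:
it is nonempty, all its states are mutually reachable, and it is maximal
with this property. -/
def IsSCC {n : ℕ} (V : VASS n) (S : Set (Fin n)) : Prop :=
  S.Nonempty ∧ (∀ p ∈ S, ∀ q ∈ S, Reach V p q) ∧
  (∀ p ∈ S, ∀ q : Fin n, Reach V p q → Reach V q p → q ∈ S)

/-- All control states occurring in the sequence of transitions `γ` belong to `S`. -/
def WithinS {n : ℕ} (S : Set (Fin n)) (γ : List (Transition n)) : Prop :=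
  ∀ t ∈ γ, t.1 ∈ S ∧ t.2.2 ∈ S

/-!
The sign pattern of the short cycles along the run decides how a large target can be reached.

By Gordan's alternative, either the effects of the short cycles lie in a half-plane
`{v | d · v ≤ 0}` with `d` semi-positive and small, or two of them have a positive combination with
small coefficients. In the first case, `d` cannot be positive, as `d · u` hardly grows along the
run; so `d` is a coordinate vector, one counter stays small, and the other one can only have become
large through a short cycle that increases it and leaves the small counter unchanged. A rotation
of that cycle is enabled once the large counter exceeds its length.

In the second case, strong connectivity provides a short cycle of positive effect at every state of
the run. It is enabled wherever both counters are large. If this never happens, then from some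
point on one counter is large and the other is bounded by a constant `B`. Adding the bounded counter
to the control state gives a graph with `n * B` vertices, and the growth of the large counter yields
a short cycle of that graph on which the bounded counter is restored.
-/

section Walks

variable {T K G : Type*}

/-- `IsWalk src tgt p l q`: the list of edges `l` is a walk from `p` to `q` in the directed
multigraph in which the edge `e` leads from `src e` to `tgt e`. -/
def IsWalk (src tgt : T → K) : K → List T → K → Prop
  | p, [], q => p = q
  | p, e :: l, q => src e = p ∧ IsWalk src tgt (tgt e) l q

/-- `IsShortCycle src tgt k l r c`: `c` is a nonempty closed walk at the vertex `r` that has at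
most `k` edges, all of them taken from the list `l`. -/
structure IsShortCycle (src tgt : T → K) (k : ℕ) (l : List T) (r : K) (c : List T) : Prop where
  isWalk : IsWalk src tgt r c r
  ne_nil : c ≠ []
  length_le : c.length ≤ k
  subset : c ⊆ l

variable {src tgt : T → K} {k : ℕ} {p q r : K} {a b c l l' : List T} {F : Finset K}

theorem IsShortCycle.mono (h : IsShortCycle src tgt k l r c) (hl : l ⊆ l') :
    IsShortCycle src tgt k l' r c :=
  ⟨h.isWalk, h.ne_nil, h.length_le, List.Subset.trans h.subset hl⟩

theorem IsShortCycle.exists_src_eq (h : IsShortCycle src tgt k l r c) : ∃ e ∈ l, src e = r := by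
  obtain ⟨e, c', rfl⟩ := List.exists_cons_of_ne_nil h.ne_nil
  exact ⟨e, h.subset List.mem_cons_self, h.isWalk.1⟩

namespace IsWalk

theorem append_iff :
    IsWalk src tgt p (a ++ b) q ↔ ∃ r, IsWalk src tgt p a r ∧ IsWalk src tgt r b q := by
  induction a generalizing p with
  | nil => simp [IsWalk]
  | cons e a ih => simp [IsWalk, ih, and_assoc]

theorem append (ha : IsWalk src tgt p a r) (hb : IsWalk src tgt r b q) :
    IsWalk src tgt p (a ++ b) q :=
  append_iff.2 ⟨r, ha, hb⟩

theorem flatten_replicate (hc : IsWalk src tgt r c r) (m : ℕ) :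
    IsWalk src tgt r (List.replicate m c).flatten r := by
  induction m with
  | zero => simp [IsWalk]
  | succ m ih => simpa [List.replicate_succ] using hc.append ih

theorem split_at (h : IsWalk src tgt p l q) {i : ℕ} (hi : i < l.length) :
    IsWalk src tgt p (l.take i) (src l[i]) ∧ IsWalk src tgt (src l[i]) (l.drop i) q := by
  rw [← List.take_append_drop i l, append_iff] at h
  obtain ⟨r, htake, hdrop⟩ := h
  have hdrop' := hdrop
  rw [List.drop_eq_getElem_cons hi] at hdrop'
  rw [hdrop'.1]
  exact ⟨htake, hdrop⟩

/-- The pigeonhole principle: among the first `F.card + 1` edges two have the same source. -/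
theorem exists_shortCycle_infix (h : IsWalk src tgt p l q) (hF : ∀ e ∈ l, src e ∈ F)
    (hlen : F.card < l.length) :
    ∃ a c b r, l = a ++ c ++ b ∧ IsShortCycle src tgt F.card l r c ∧
      IsWalk src tgt p (a ++ b) q := by
  obtain ⟨i, j, hij, hj, hjl, hsrc⟩ : ∃ i j, ∃ (_ : i < j) (_ : j ≤ F.card) (_ : j < l.length),
      src l[i] = src l[j] := by
    have hcard : F.card < (Finset.univ : Finset (Fin (F.card + 1))).card := by simp
    obtain ⟨i, -, j, -, hne, heq⟩ := Finset.exists_ne_map_eq_of_card_lt_of_maps_to hcard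
      (f := fun i : Fin (F.card + 1) => src (l[(i : ℕ)]'(by omega)))
      (fun i _ => hF _ (List.getElem_mem _))
    rcases lt_or_gt_of_ne hne with hlt | hlt
    · exact ⟨i, j, hlt, by omega, by omega, heq⟩
    · exact ⟨j, i, hlt, by omega, by omega, heq.symm⟩
  have hdrop : l.drop j = (l.drop i).drop (j - i) := by
    rw [List.drop_drop, Nat.add_sub_cancel' hij.le]
  have hl : l = l.take i ++ (l.drop i).take (j - i) ++ l.drop j := by
    rw [hdrop, List.append_assoc, List.take_append_drop, List.take_append_drop]
  obtain ⟨ha, hcb⟩ := h.split_at (hij.trans hjl)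
  have hc := (hcb.split_at (i := j - i) (by rw [List.length_drop]; omega)).1
  simp only [List.getElem_drop, Nat.add_sub_cancel' hij.le, ← hsrc] at hc
  have hb := (h.split_at hjl).2
  rw [← hsrc] at hb
  refine ⟨_, _, _, _, hl, ⟨hc, ?_, ?_, ?_⟩, ha.append hb⟩
  · simp only [ne_eq, List.take_eq_nil_iff, List.drop_eq_nil_iff]
    omega
  · simp only [List.length_take, List.length_drop]
    omega
  · exact List.Subset.trans (List.take_subset _ _) (List.drop_subset _ _)

section Weights

variable [AddCommMonoid G]

/-- Removing cycles of nonpositive weight shortens a walk without decreasing its weight. -/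
theorem exists_length_le_card [PartialOrder G] [IsOrderedAddMonoid G] {w : T → G}
    (h : IsWalk src tgt p l q) (hF : ∀ e ∈ l, src e ∈ F)
    (hw : ∀ r c, IsShortCycle src tgt F.card l r c → (c.map w).sum ≤ 0) :
    ∃ l', IsWalk src tgt p l' q ∧ l' ⊆ l ∧ l'.length ≤ F.card ∧
      (l.map w).sum ≤ (l'.map w).sum := by
  induction hm : l.length using Nat.strong_induction_on generalizing l with
  | _ m ih =>
    subst hm
    obtain hlen | hlen := le_or_gt l.length F.card
    · exact ⟨l, h, List.Subset.refl l, hlen, le_rfl⟩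
    obtain ⟨a, c, b, r, hl, hc, hab⟩ := h.exists_shortCycle_infix hF hlen
    have hsub : a ++ b ⊆ l := by simp [hl]
    have hlt : (a ++ b).length < l.length := by
      have := List.length_pos_iff.2 hc.ne_nil
      simp only [hl, List.length_append]
      omega
    obtain ⟨l', hl', hsub', hlen', hle⟩ := ih _ hlt hab (fun e he => hF e (hsub he))
      (fun r' c' hc' => hw r' c' (hc'.mono hsub)) rfl
    refine ⟨l', hl', List.Subset.trans hsub' hsub, hlen', ?_⟩
    calc (l.map w).sum = (c.map w).sum + ((a ++ b).map w).sum := by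
          simp only [hl, List.map_append, List.sum_append]
          abel
      _ ≤ ((a ++ b).map w).sum := add_le_of_nonpos_left (hw r c hc)
      _ ≤ (l'.map w).sum := hle

theorem exists_shortCycle_pos [LinearOrder G] [IsOrderedAddMonoid G] {w : T → G} {W : G}
    (h : IsWalk src tgt p l q) (hF : ∀ e ∈ l, src e ∈ F) (hW : 0 ≤ W) (hwW : ∀ e ∈ l, w e ≤ W)
    (hsum : F.card • W < (l.map w).sum) :
    ∃ r c, IsShortCycle src tgt F.card l r c ∧ 0 < (c.map w).sum := by
  by_contra! hw
  obtain ⟨l', -, hsub, hlen, hle⟩ := h.exists_length_le_card hF hw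
  refine absurd hsum (not_lt.2 ?_)
  calc (l.map w).sum ≤ (l'.map w).sum := hle
    _ ≤ (l'.map w).length • W :=
        List.sum_le_card_nsmul _ _ (by simpa using fun e he => hwW e (hsub he))
    _ ≤ F.card • W := nsmul_le_nsmul_left hW (by simpa using hlen)

end Weights

end IsWalk

/-- A cycle of weight `0` is rotated so as to start at a vertex where the weight of the prefix is
minimal. -/
theorem IsShortCycle.exists_rotation_nonneg [AddCommGroup G] [LinearOrder G]
    [IsOrderedAddMonoid G] {w : T → G} (h : IsShortCycle src tgt k l r c)
    (hw : (c.map w).sum = 0) :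
    ∃ r' d, IsShortCycle src tgt k l r' d ∧ d.Perm c ∧ ∀ j, 0 ≤ ((d.take j).map w).sum := by
  set s : ℕ → G := fun i => ((c.map w).take i).sum
  obtain ⟨i, hi, hmin⟩ : ∃ i < c.length, ∀ j, s i ≤ s j := by
    obtain ⟨i, hi, hmin⟩ := Finset.exists_min_image (Finset.range c.length) s
      (by simpa using h.ne_nil)
    simp only [Finset.mem_range] at hi hmin
    refine ⟨i, hi, fun j => ?_⟩
    obtain hj | hj := lt_or_ge j c.length
    · exact hmin j hj
    · have hs : s j = s 0 := by simp [s, List.take_of_length_le, hj, hw]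
      exact hs ▸ hmin 0 (by omega)
  obtain ⟨ha, hb⟩ := h.isWalk.split_at hi
  have hperm : (c.drop i ++ c.take i).Perm c :=
    List.perm_append_comm.trans (.of_eq (List.take_append_drop i c))
  refine ⟨_, c.drop i ++ c.take i, ⟨hb.append ha, ?_, hperm.length_eq.trans_le h.length_le,
    List.Subset.trans hperm.subset h.subset⟩, hperm, fun j => ?_⟩
  · exact fun hnil => h.ne_nil (List.nil_perm.1 (hnil ▸ hperm))
  refine nonneg_of_le_add_right (a := s i) ?_
  obtain hj | hj := le_total j (c.length - i)
  · calc s i ≤ s (i + j) := hmin _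
      _ = s i + (((c.drop i ++ c.take i).take j).map w).sum := by
          simp [s, List.take_append_of_le_length, hj, List.take_add]
  · calc s i ≤ s (min (j - (c.length - i)) i) := hmin _
      _ = (s i + ((c.map w).drop i).sum) + s (min (j - (c.length - i)) i) := by
          rw [← List.sum_append, List.take_append_drop, hw, zero_add]
      _ = s i + (((c.drop i ++ c.take i).take j).map w).sum := by
          simp [s, List.take_append, List.take_of_length_le, hj, List.take_take, ← add_assoc]

end Walks

theorem exists_le_max_forall_le {G : Type*} [AddCommMonoid G] [LinearOrder G]
    [IsOrderedAddMonoid G] {f : ℕ → G} {m : ℕ} {M B : G} (hf : ∀ i < m, f (i + 1) ≤ f i + M)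
    (hm : B ≤ f m) : ∃ k ≤ m, f k ≤ max (f 0) (B + M) ∧ ∀ i, k ≤ i → i ≤ m → B ≤ f i := by
  induction m with
  | zero => exact ⟨0, le_rfl, le_max_left _ _, fun i _ hi => by rwa [Nat.le_zero.1 hi]⟩
  | succ m ih =>
    have extend : ∀ k, (∀ i, k ≤ i → i ≤ m → B ≤ f i) → ∀ i, k ≤ i → i ≤ m + 1 → B ≤ f i := by
      intro k hk i hki hi
      obtain hi | rfl := Nat.le_succ_iff.1 hi
      exacts [hk i hki hi, hm]
    obtain h | h := le_or_gt B (f m)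
    · obtain ⟨k, hk, hle, hge⟩ := ih (fun i hi => hf i (by omega)) h
      exact ⟨k, by omega, hle, extend k hge⟩
    · have hjump : f (m + 1) ≤ B + M := (hf m (by omega)).trans (by gcongr)
      exact ⟨m + 1, le_rfl, le_max_of_le_right hjump,
        extend _ fun i hki hi => absurd hki (by omega)⟩

section Coordinates

/-- The additive form of `proj`. The coordinates of a vector are addressed as `j` and `j.rev`, so
that one argument covers both of them. -/
def projHom (j : Fin 2) : Vec2 →+ ℤ where
  toFun := proj j
  map_zero' := by simp [proj]
  map_add' v w := by unfold proj; split <;> simp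

variable {v w : Vec2}

theorem forall_fin_two_iff_rev {P : Fin 2 → Prop} (j : Fin 2) : (∀ i, P i) ↔ P j ∧ P j.rev := by
  fin_cases j <;> simp [Fin.forall_fin_two, and_comm]

theorem projHom_zero_apply (v : Vec2) : projHom 0 v = v.1 := by simp [projHom, proj]

theorem projHom_one_apply (v : Vec2) : projHom 1 v = v.2 := by simp [projHom, proj]

theorem nonneg_iff_forall_projHom : 0 ≤ v ↔ ∀ j, 0 ≤ projHom j v := by
  simp [Fin.forall_fin_two, projHom_zero_apply, projHom_one_apply, Prod.le_def]

theorem pos_iff_forall_projHom : Pos v ↔ ∀ j, 0 < projHom j v := by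
  simp [Fin.forall_fin_two, projHom_zero_apply, projHom_one_apply, Pos]

theorem semiPos_of_projHom (j : Fin 2) (hj : 0 < projHom j v) (hrev : 0 ≤ projHom j.rev v) :
    SemiPos v := by
  fin_cases j
  · exact ⟨hj.le, hrev, .inl hj⟩
  · exact ⟨hrev, hj.le, .inr hj⟩

theorem abs_projHom_le_vnorm (j : Fin 2) (v : Vec2) : |projHom j v| ≤ vnorm v := by
  fin_cases j <;> simp [projHom_zero_apply, projHom_one_apply, vnorm]

theorem projHom_le_vnorm (j : Fin 2) (v : Vec2) : projHom j v ≤ vnorm v :=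
  (abs_le.1 (abs_projHom_le_vnorm j v)).2

theorem neg_vnorm_le_projHom (j : Fin 2) (v : Vec2) : -(vnorm v : ℤ) ≤ projHom j v :=
  (abs_le.1 (abs_projHom_le_vnorm j v)).1

theorem exists_projHom_eq_vnorm (hv : 0 ≤ v) : ∃ j, projHom j v = vnorm v := by
  obtain ⟨h₁, h₂⟩ := hv
  simp only [Prod.fst_zero, Prod.snd_zero] at h₁ h₂
  simp only [Fin.exists_fin_two, projHom_zero_apply, projHom_one_apply, vnorm]
  omega

theorem vnorm_add_le (v w : Vec2) : vnorm (v + w) ≤ vnorm v + vnorm w := by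
  simp only [vnorm, Prod.fst_add, Prod.snd_add]
  omega

end Coordinates

section Paths

variable {n : ℕ} {V : VASS n} {l π : List (Transition n)} {p q r : Fin n} {u : Vec2}

theorem effect_nil : effect ([] : List (Transition n)) = 0 := by simp [effect]

theorem effect_cons (t : Transition n) (l : List (Transition n)) :
    effect (t :: l) = t.2.1 + effect l := by simp [effect]

theorem effect_append (l l' : List (Transition n)) :
    effect (l ++ l') = effect l + effect l' := by simp [effect]

theorem effect_flatten_replicate (k : ℕ) (l : List (Transition n)) :
    effect (List.replicate k l).flatten = k • effect l := by
  induction k with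
  | zero => simp [effect_nil]
  | succ k ih => rw [List.replicate_succ, List.flatten_cons, effect_append, ih, succ_nsmul']

theorem map_effect (f : Vec2 →+ ℤ) (l : List (Transition n)) :
    f (effect l) = (l.map fun t => f t.2.1).sum := by
  simp [effect, map_list_sum, Function.comp_def]

theorem vnorm_le_vassNorm {t : Transition n} (ht : t ∈ V) : vnorm t.2.1 ≤ vassNorm V :=
  Finset.le_sup (f := fun t : Transition n => vnorm t.2.1) ht

theorem projHom_le_vassNorm {t : Transition n} (ht : t ∈ V) (j : Fin 2) :
    projHom j t.2.1 ≤ vassNorm V :=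
  (projHom_le_vnorm j _).trans (Nat.cast_le.2 (vnorm_le_vassNorm ht))

theorem vnorm_effect_le (hl : ∀ t ∈ l, t ∈ V) : vnorm (effect l) ≤ l.length * vassNorm V := by
  induction l with
  | nil => simp [effect_nil, vnorm]
  | cons t l ih =>
    calc vnorm (effect (t :: l)) ≤ vnorm t.2.1 + vnorm (effect l) :=
          effect_cons t l ▸ vnorm_add_le _ _
      _ ≤ vassNorm V + l.length * vassNorm V :=
          add_le_add (vnorm_le_vassNorm (hl t (by simp))) (ih fun s hs => hl s (by simp [hs]))
      _ = (t :: l).length * vassNorm V := by rw [List.length_cons]; ring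

theorem neg_mul_vassNorm_le_projHom_effect (hl : ∀ t ∈ l, t ∈ V) {k : ℕ} (hk : l.length ≤ k)
    (j : Fin 2) : -(k * vassNorm V : ℤ) ≤ projHom j (effect l) :=
  (neg_le_neg (by exact_mod_cast (vnorm_effect_le hl).trans (Nat.mul_le_mul_right _ hk))).trans
    (neg_vnorm_le_projHom j _)

theorem vecAt_zero (π : List (Transition n)) (u : Vec2) : vecAt π u 0 = u := by
  simp [vecAt, effect_nil]

theorem vecAt_length (π : List (Transition n)) (u : Vec2) :
    vecAt π u π.length = u + effect π := by simp [vecAt]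

theorem vecAt_cons_succ (t : Transition n) (π : List (Transition n)) (u : Vec2) (i : ℕ) :
    vecAt (t :: π) u (i + 1) = vecAt π (u + t.2.1) i := by
  simp [vecAt, effect_cons, add_assoc]

theorem vecAt_succ (u : Vec2) {i : ℕ} (hi : i < π.length) :
    vecAt π u (i + 1) = vecAt π u i + π[i].2.1 := by
  rw [vecAt, ← List.take_append_getElem hi, effect_append, ← add_assoc, effect_cons, effect_nil,
    add_zero, vecAt]

theorem vecAt_drop (π : List (Transition n)) (u : Vec2) (k i : ℕ) :
    vecAt (π.drop k) (vecAt π u k) i = vecAt π u (k + i) := by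
  simp [vecAt, List.take_add, effect_append, add_assoc]

theorem vecAt_drop_length (π : List (Transition n)) (u : Vec2) {k : ℕ} (hk : k ≤ π.length) :
    vecAt (π.drop k) (vecAt π u k) (π.drop k).length = vecAt π u π.length := by
  rw [vecAt_drop, List.length_drop, Nat.add_sub_cancel' hk]

theorem stateAt_zero (π : List (Transition n)) (q : Fin n) : stateAt π q 0 = q := by
  simp [stateAt]

theorem stateAt_cons_succ (t : Transition n) (π : List (Transition n)) (q : Fin n) (i : ℕ) :
    stateAt (t :: π) q (i + 1) = stateAt π t.2.2 i := by
  cases h : (π.take i).getLast? <;> simp [stateAt, List.getLast?_cons, h]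

theorem stateAt_drop (π : List (Transition n)) (q : Fin n) (k i : ℕ) :
    stateAt (π.drop k) (stateAt π q k) i = stateAt π q (k + i) := by
  cases h : ((π.drop k).take i).getLast? <;>
    simp [stateAt, List.take_add, List.getLast?_append, h]

/-- Walks in the control graph of a 2-VASS, with given end points: the transitions are not required
to belong to a particular 2-VASS. -/
abbrev IsControlWalk (p : Fin n) (l : List (Transition n)) (q : Fin n) : Prop :=
  IsWalk (fun t : Transition n => t.1) (fun t => t.2.2) p l q

/-- Cycles of length at most the number of control states that only use transitions of `l`. -/
abbrev IsControlCycle (l : List (Transition n)) (r : Fin n) (c : List (Transition n)) : Prop :=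
  IsShortCycle (fun t : Transition n => t.1) (fun t => t.2.2) n l r c

theorem isControlWalk_endState (hl : l.IsChain fun s t => s.2.2 = t.1) (hp : startsAt l p) :
    IsControlWalk p l (endState l p) := by
  induction l generalizing p with
  | nil => exact (stateAt_zero [] p).symm
  | cons t l ih =>
    rw [List.isChain_cons] at hl
    refine ⟨hp t (by simp), ?_⟩
    rw [endState, List.length_cons, stateAt_cons_succ]
    exact ih hl.2 fun s hs => (hl.1 s hs).symm

namespace IsControlWalk

theorem endState_eq (h : IsControlWalk p l q) : endState l p = q := by
  induction l generalizing p with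
  | nil => exact (stateAt_zero [] p).trans h
  | cons t l ih => exact (stateAt_cons_succ t l p l.length).trans (ih h.2)

theorem startsAt (h : IsControlWalk p l q) : startsAt l p := by
  cases l with
  | nil => simp [_root_.startsAt]
  | cons t l => simpa [_root_.startsAt] using h.1

theorem isChain (h : IsControlWalk p l q) : l.IsChain fun s t => s.2.2 = t.1 := by
  induction l generalizing p with
  | nil => exact List.isChain_nil
  | cons t l ih =>
    exact List.isChain_cons.2 ⟨fun s hs => (IsControlWalk.startsAt h.2 s hs).symm, ih h.2⟩

theorem isCycle (h : IsControlWalk r l r) (hne : l ≠ []) (hV : ∀ t ∈ l, t ∈ V) :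
    IsCycle V l := by
  refine ⟨⟨hV, isChain h⟩, hne, ?_⟩
  have hend := endState_eq h
  obtain ⟨t, l, rfl⟩ := List.exists_cons_of_ne_nil hne
  simpa [endState, stateAt, List.getLast?_cons, h.1] using hend.symm

theorem take (h : IsControlWalk p l q) (i : ℕ) :
    IsControlWalk p (l.take i) (stateAt l p i) := by
  rw [← List.take_append_drop i l] at h
  obtain ⟨r, htake, -⟩ := IsWalk.append_iff.1 h
  have hr : stateAt l p i = r := by
    simpa only [endState, stateAt, List.take_length] using endState_eq htake
  rwa [hr]

theorem drop (h : IsControlWalk p l q) (i : ℕ) :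
    IsControlWalk (stateAt l p i) (l.drop i) q := by
  have htake := take h i
  rw [← List.take_append_drop i l] at h
  obtain ⟨r, htake', hdrop⟩ := IsWalk.append_iff.1 h
  rwa [← endState_eq htake, endState_eq htake']

theorem stateAt_getElem (h : IsControlWalk p l q) {i : ℕ} (hi : i < l.length) :
    stateAt l p i = l[i].1 := by
  have hdrop := drop h i
  rw [List.drop_eq_getElem_cons hi] at hdrop
  exact hdrop.1.symm

theorem exists_shortCycle_pos (h : IsControlWalk p l q) (f : Vec2 →+ ℤ) (W : ℕ)
    (hW : ∀ t ∈ l, f t.2.1 ≤ W) (hf : n * W < f (effect l)) :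
    ∃ r c, IsControlCycle l r c ∧ 0 < f (effect c) := by
  simpa [map_effect] using IsWalk.exists_shortCycle_pos (F := Finset.univ)
    (w := fun t : Transition n => f t.2.1) (W := (W : ℤ)) h (by simp) (by simp) hW
    (by simpa [map_effect] using hf)

theorem map_effect_le (h : IsControlWalk p l q) (f : Vec2 →+ ℤ) (W : ℕ)
    (hW : ∀ t ∈ l, f t.2.1 ≤ W) (hf : ∀ r c, IsControlCycle l r c → f (effect c) ≤ 0) :
    f (effect l) ≤ n * W := by
  contrapose! hf
  exact exists_shortCycle_pos h f W hW hf

end IsControlWalk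

namespace IsControlCycle

variable {c : List (Transition n)}

theorem exists_stateAt_eq (hc : IsControlCycle l r c) (h : IsControlWalk p l q) :
    ∃ i < l.length, stateAt l p i = r := by
  obtain ⟨t, ht, rfl⟩ := hc.exists_src_eq
  obtain ⟨i, hi, rfl⟩ := List.getElem_of_mem ht
  exact ⟨i, hi, h.stateAt_getElem hi⟩

theorem vnorm_effect_le (hc : IsControlCycle l r c) (hl : ∀ t ∈ l, t ∈ V) :
    vnorm (effect c) ≤ n * vassNorm V :=
  (_root_.vnorm_effect_le fun t ht => hl t (hc.subset ht)).trans
    (Nat.mul_le_mul_right _ hc.length_le)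

theorem flatten_replicate (hc : IsControlCycle l r c) (hl : ∀ t ∈ l, t ∈ V) (m : ℕ) :
    IsControlWalk r (List.replicate m c).flatten r ∧
      (∀ t ∈ (List.replicate m c).flatten, t ∈ V) ∧
      (List.replicate m c).flatten.length ≤ m * n := by
  refine ⟨hc.isWalk.flatten_replicate m, fun t ht => ?_, ?_⟩
  · obtain ⟨c', hc', htc⟩ := List.mem_flatten.1 ht
    exact hl t (hc.subset (List.eq_of_mem_replicate hc' ▸ htc))
  · simpa using Nat.mul_le_mul_left m hc.length_le

end IsControlCycle

theorem Reach.exists_walk_length_le (h : Reach V p q) :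
    ∃ l, IsControlWalk p l q ∧ (∀ t ∈ l, t ∈ V) ∧ l.length ≤ n := by
  obtain ⟨π, hπ, hp, rfl⟩ := h
  obtain ⟨l, hl, hsub, hlen, -⟩ := (isControlWalk_endState hπ.2 hp).exists_length_le_card
    (F := Finset.univ) (w := fun _ => 0) (by simp) (by simp)
  exact ⟨l, hl, fun t ht => hπ.1 t (hsub ht), by simpa using hlen⟩

theorem enabled_iff_forall_jEnabled : Enabled l q u ↔ ∀ j, JEnabled l q u j := by
  simp only [Enabled, JEnabled, nonneg_iff_forall_projHom]
  exact ⟨fun h j => ⟨h.1, fun i hi => h.2 i hi j⟩,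
    fun h => ⟨(h 0).1, fun i hi j => (h j).2 i hi⟩⟩

theorem jEnabled_of_length_mul_le (hq : startsAt l q) (hV : ∀ t ∈ l, t ∈ V) {j : Fin 2}
    (hu : l.length * vassNorm V ≤ projHom j u) : JEnabled l q u j := by
  refine ⟨hq, fun i _ => ?_⟩
  change 0 ≤ projHom j (u + effect (l.take i))
  have hloss := neg_mul_vassNorm_le_projHom_effect
    (fun t ht => hV t (List.mem_of_mem_take ht)) (List.length_take_le' i l) j
  rw [map_add]
  linarith

end Paths

section Runs

variable {n : ℕ} {V : VASS n} {π γ : List (Transition n)} {q : Fin n} {u : Vec2}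

/-- Some configuration of the run `π` from `(q, u)` enables a semi-positive cycle of `V` of length
at most `L`. -/
def EnablesSemiPosCycle (V : VASS n) (π : List (Transition n)) (q : Fin n) (u : Vec2) (L : ℕ) :
    Prop :=
  ∃ i ≤ π.length, ∃ γ : List (Transition n),
    IsCycle V γ ∧ Enabled γ (stateAt π q i) (vecAt π u i) ∧ SemiPos (effect γ) ∧ γ.length ≤ L

namespace EnablesSemiPosCycle

variable {L L' : ℕ}

theorem mono (h : EnablesSemiPosCycle V π q u L) (hL : L ≤ L') :
    EnablesSemiPosCycle V π q u L' := by
  obtain ⟨i, hi, γ, hγ, hen, hpos, hlen⟩ := h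
  exact ⟨i, hi, γ, hγ, hen, hpos, hlen.trans hL⟩

theorem of_drop {k : ℕ} (hk : k ≤ π.length)
    (h : EnablesSemiPosCycle V (π.drop k) (stateAt π q k) (vecAt π u k) L) :
    EnablesSemiPosCycle V π q u L := by
  obtain ⟨i, hi, γ, hγ, hen, hpos, hlen⟩ := h
  rw [stateAt_drop, vecAt_drop] at hen
  rw [List.length_drop] at hi
  exact ⟨k + i, by omega, γ, hγ, hen, hpos, hlen⟩

theorem of_isControlWalk {i : ℕ} (hi : i ≤ π.length)
    (hγ : IsControlWalk (stateAt π q i) γ (stateAt π q i)) (hV : ∀ t ∈ γ, t ∈ V)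
    (hlen : γ.length ≤ L) (j : Fin 2) (hj : JEnabled γ (stateAt π q i) (vecAt π u i) j)
    (hrev : JEnabled γ (stateAt π q i) (vecAt π u i) j.rev) (hpos : 0 < projHom j (effect γ))
    (hnonneg : 0 ≤ projHom j.rev (effect γ)) : EnablesSemiPosCycle V π q u L := by
  refine ⟨i, hi, γ, hγ.isCycle ?_ hV, ?_, semiPos_of_projHom j hpos hnonneg, hlen⟩
  · rintro rfl
    simp [effect_nil] at hpos
  · exact enabled_iff_forall_jEnabled.2 ((forall_fin_two_iff_rev j).2 ⟨hj, hrev⟩)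

end EnablesSemiPosCycle

namespace IsRun

theorem isControlWalk (h : IsRun V π q u) : IsControlWalk q π (endState π q) :=
  isControlWalk_endState h.1.2 h.2.1

theorem projHom_nonneg (h : IsRun V π q u) (j : Fin 2) {i : ℕ} (hi : i ≤ π.length) :
    0 ≤ projHom j (vecAt π u i) :=
  nonneg_iff_forall_projHom.1 (h.2.2 i hi) j

theorem drop (h : IsRun V π q u) {k : ℕ} (hk : k ≤ π.length) :
    IsRun V (π.drop k) (stateAt π q k) (vecAt π u k) := by
  have hdrop := h.isControlWalk.drop k
  refine ⟨⟨fun t ht => h.1.1 t (List.mem_of_mem_drop ht), hdrop.isChain⟩, hdrop.startsAt, ?_⟩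
  intro i hi
  rw [List.length_drop] at hi
  rw [vecAt_drop]
  exact h.2.2 (k + i) (by omega)

theorem projHom_vecAt_succ_le (h : IsRun V π q u) (j : Fin 2) {i : ℕ} (hi : i < π.length) :
    projHom j (vecAt π u (i + 1)) ≤ projHom j (vecAt π u i) + vassNorm V := by
  rw [vecAt_succ u hi, map_add]
  gcongr
  exact projHom_le_vassNorm (h.1.1 _ (List.getElem_mem hi)) j

theorem exists_drop_forall_le (h : IsRun V π q u) (j : Fin 2) {B : ℤ}
    (hB : B ≤ projHom j (vecAt π u π.length)) :
    ∃ k ≤ π.length, projHom j (vecAt π u k) ≤ max (projHom j u) (B + vassNorm V) ∧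
      ∀ i ≤ (π.drop k).length, B ≤ projHom j (vecAt (π.drop k) (vecAt π u k) i) := by
  obtain ⟨k, hk, hle, hge⟩ := exists_le_max_forall_le (f := fun i => projHom j (vecAt π u i))
    (fun i hi => h.projHom_vecAt_succ_le j hi) hB
  refine ⟨k, hk, by simpa [vecAt_zero] using hle, fun i hi => ?_⟩
  rw [List.length_drop] at hi
  rw [vecAt_drop]
  exact hge (k + i) (by omega) (by omega)

end IsRun

end Runs

section HalfPlane

variable {n N : ℕ} {V : VASS n} {π l c : List (Transition n)} {p q r : Fin n} {u d : Vec2}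
  {j : Fin 2}

theorem IsRun.enablesSemiPosCycle_of_flat_cycle (h : IsRun V π q u)
    (hj : ∀ i ≤ π.length, (n * vassNorm V : ℤ) ≤ projHom j (vecAt π u i))
    (hc : IsControlCycle π r c) (hpos : 0 < projHom j (effect c))
    (hflat : projHom j.rev (effect c) = 0) : EnablesSemiPosCycle V π q u n := by
  obtain ⟨r', d, hd, hperm, hprefix⟩ := hc.exists_rotation_nonneg
    (w := fun t : Transition n => projHom j.rev t.2.1) (by rwa [← map_effect])
  obtain ⟨i, hi, rfl⟩ := IsControlCycle.exists_stateAt_eq hd h.isControlWalk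
  have hV : ∀ t ∈ d, t ∈ V := fun t ht => h.1.1 t (hd.subset ht)
  have heffect : effect d = effect c := (hperm.map _).sum_eq
  have hstart : startsAt d (stateAt π q i) := IsControlWalk.startsAt hd.isWalk
  have hlen : (d.length * vassNorm V : ℤ) ≤ n * vassNorm V := by
    exact_mod_cast Nat.mul_le_mul_right _ hd.length_le
  refine .of_isControlWalk hi.le hd.isWalk hV hd.length_le j
    (jEnabled_of_length_mul_le hstart hV (hlen.trans (hj i hi.le))) ⟨hstart, fun m _ => ?_⟩
    (heffect ▸ hpos) (heffect ▸ hflat.ge)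
  change 0 ≤ projHom j.rev (vecAt π u i + effect (d.take m))
  rw [map_add, map_effect]
  exact add_nonneg (h.projHom_nonneg j.rev hi.le) (hprefix m)

/-- The weight `N` on the second coordinate exceeds what a short cycle can gain in the first one,
so that a cycle of positive weight cannot lose in the second coordinate. -/
theorem IsControlWalk.exists_flat_cycle (hl : IsControlWalk p l q) (hV : ∀ t ∈ l, t ∈ V)
    (hN : n * vassNorm V ≤ N) (hcyc : ∀ r c, IsControlCycle l r c → projHom j.rev (effect c) ≤ 0)
    (hsum : (N + N * N : ℤ) < projHom j (effect l) + N * projHom j.rev (effect l)) :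
    ∃ r c, IsControlCycle l r c ∧ 0 < projHom j (effect c) ∧ projHom j.rev (effect c) = 0 := by
  have hN' : (n * vassNorm V : ℤ) ≤ N := by exact_mod_cast hN
  obtain ⟨r, c, hc, hpos⟩ := hl.exists_shortCycle_pos (projHom j + N • projHom j.rev)
    (vassNorm V + N * vassNorm V)
    (fun t ht => by
      simp only [AddMonoidHom.add_apply, AddMonoidHom.smul_apply, nsmul_eq_mul]
      push_cast
      gcongr
      exacts [projHom_le_vassNorm (hV t ht) j, projHom_le_vassNorm (hV t ht) j.rev])
    (by
      simp only [AddMonoidHom.add_apply, AddMonoidHom.smul_apply, nsmul_eq_mul]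
      push_cast
      nlinarith [mul_le_mul_of_nonneg_left hN' N.cast_nonneg])
  simp only [AddMonoidHom.add_apply, AddMonoidHom.smul_apply, nsmul_eq_mul] at hpos
  have hgain : projHom j (effect c) ≤ N :=
    (projHom_le_vnorm j _).trans (by exact_mod_cast (hc.vnorm_effect_le hV).trans hN)
  have hflat : projHom j.rev (effect c) = 0 :=
    le_antisymm (hcyc r c hc) (by by_contra! hneg; nlinarith)
  exact ⟨r, c, hc, by simpa [hflat] using hpos, hflat⟩

theorem vassNorm_le_of_mul_le (q : Fin n) (hN : n * vassNorm V ≤ N) : vassNorm V ≤ N :=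
  (Nat.le_mul_of_pos_left _ q.pos).trans hN

namespace IsRun

theorem map_vecAt_le (h : IsRun V π q u) (f : Vec2 →+ ℤ) (W : ℕ) (hW : ∀ t ∈ π, f t.2.1 ≤ W)
    (hcyc : ∀ r c, IsControlCycle π r c → f (effect c) ≤ 0) (i : ℕ) :
    f (vecAt π u i) ≤ f u + n * W := by
  rw [vecAt, map_add]
  gcongr
  exact (h.isControlWalk.take i).map_effect_le f W (fun t ht => hW t (List.mem_of_mem_take ht))
    fun r c hc => hcyc r c (hc.mono (List.take_subset _ _))

theorem projHom_vecAt_le (h : IsRun V π q u) (hN : n * vassNorm V ≤ N)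
    (hcyc : ∀ r c, IsControlCycle π r c → projHom j (effect c) ≤ 0) (i : ℕ) :
    projHom j (vecAt π u i) ≤ vnorm u + N :=
  (h.map_vecAt_le (projHom j) (vassNorm V)
    (fun t ht => projHom_le_vassNorm (h.1.1 t ht) j) hcyc i).trans
    (add_le_add (projHom_le_vnorm j u) (by exact_mod_cast hN))

theorem enablesSemiPosCycle_of_projHom_lt (h : IsRun V π q u) (hN : n * vassNorm V ≤ N)
    (hcyc : ∀ r c, IsControlCycle π r c → projHom j.rev (effect c) ≤ 0)
    (hlarge : ((N + 1) * vnorm u + (2 * N ^ 2 + 3 * N) : ℤ) < projHom j (vecAt π u π.length)) :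
    EnablesSemiPosCycle V π q u n := by
  have hM : (vassNorm V : ℤ) ≤ N := by exact_mod_cast vassNorm_le_of_mul_le q hN
  have hu := projHom_le_vnorm j u
  obtain ⟨k, hk, hle, hge⟩ := h.exists_drop_forall_le j (B := N) (by nlinarith)
  have hdropCyc : ∀ r c, IsControlCycle (π.drop k) r c → projHom j.rev (effect c) ≤ 0 :=
    fun r c hc => hcyc r c (hc.mono (List.drop_subset _ _))
  have hrun := h.drop hk
  have heffect : effect (π.drop k) = vecAt π u π.length - vecAt π u k := by
    rw [← vecAt_drop_length π u hk, vecAt_length, add_sub_cancel_left]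
  have hsource : projHom j (vecAt π u k) ≤ vnorm u + 2 * N :=
    hle.trans (max_le (by linarith) (by linarith))
  have hrev := h.projHom_vecAt_le hN hcyc k
  have htarget := h.projHom_nonneg j.rev le_rfl
  obtain ⟨r, c, hc, hpos, hflat⟩ := hrun.isControlWalk.exists_flat_cycle hrun.1.1 hN hdropCyc
    (by rw [heffect, map_sub, map_sub]; nlinarith)
  exact .of_drop hk (hrun.enablesSemiPosCycle_of_flat_cycle
    (fun i hi => le_trans (by exact_mod_cast hN) (hge i hi)) hc hpos hflat)

theorem enablesSemiPosCycle_of_projHom_rev_nonpos (h : IsRun V π q u) (hN : n * vassNorm V ≤ N)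
    (hcyc : ∀ r c, IsControlCycle π r c → projHom j.rev (effect c) ≤ 0)
    (hlarge : (N + 1) * vnorm u + (2 * N ^ 2 + 3 * N) < vnorm (vecAt π u π.length)) :
    EnablesSemiPosCycle V π q u n := by
  refine h.enablesSemiPosCycle_of_projHom_lt hN hcyc ?_
  obtain ⟨i, hi⟩ := exists_projHom_eq_vnorm (h.2.2 _ le_rfl)
  zify at hlarge
  revert i
  rw [forall_fin_two_iff_rev j]
  refine ⟨fun hj => by rwa [hj], fun hrev => ?_⟩
  have := h.projHom_vecAt_le hN hcyc π.length
  nlinarith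

theorem vnorm_le_of_forall_dot_nonpos (h : IsRun V π q u) (hN : n * vassNorm V ≤ N) (hd : Pos d)
    (hdN : vnorm d ≤ N)
    (hcyc : ∀ r c, IsControlCycle π r c → d.1 * (effect c).1 + d.2 * (effect c).2 ≤ 0) :
    vnorm (vecAt π u π.length) ≤ 2 * N * vnorm u + 2 * N ^ 2 := by
  set f : Vec2 →+ ℤ := d.1 • projHom 0 + d.2 • projHom 1
  have hf : ∀ v, f v = d.1 * v.1 + d.2 * v.2 := by
    simp [f, projHom_zero_apply, projHom_one_apply]
  have hfle : ∀ v, f v ≤ 2 * N * vnorm v := by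
    intro v
    have hv₁ := projHom_zero_apply v ▸ projHom_le_vnorm 0 v
    have hv₂ := projHom_one_apply v ▸ projHom_le_vnorm 1 v
    have hd₁ : d.1 ≤ N := by unfold vnorm at hdN; omega
    have hd₂ : d.2 ≤ N := by unfold vnorm at hdN; omega
    calc f v = d.1 * v.1 + d.2 * v.2 := hf v
      _ ≤ d.1 * vnorm v + d.2 * vnorm v := by gcongr; exacts [hd.1.le, hd.2.le]
      _ ≤ N * vnorm v + N * vnorm v := by gcongr
      _ = 2 * N * vnorm v := by ring
  have hle := h.map_vecAt_le f (2 * N * vassNorm V)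
    (fun t ht => (hfle _).trans
      (by exact_mod_cast Nat.mul_le_mul_left _ (vnorm_le_vassNorm (h.1.1 t ht))))
    (fun r c hc => hf _ ▸ hcyc r c hc) π.length
  have hge : vnorm (vecAt π u π.length) ≤ f (vecAt π u π.length) := by
    obtain ⟨hv₁, hv₂⟩ := h.2.2 _ le_rfl
    simp only [Prod.fst_zero, Prod.snd_zero] at hv₁ hv₂
    rw [hf, vnorm, Nat.cast_max, Int.natAbs_of_nonneg hv₁, Int.natAbs_of_nonneg hv₂]
    obtain ⟨hd₁, hd₂⟩ := hd
    exact max_le (by nlinarith) (by nlinarith)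
  have hu := hfle u
  zify at hN ⊢
  push_cast at hle
  nlinarith

theorem enablesSemiPosCycle_of_halfPlane (h : IsRun V π q u) (hN : n * vassNorm V ≤ N)
    (hd : SemiPos d) (hdN : vnorm d ≤ N)
    (hcyc : ∀ r c, IsControlCycle π r c → d.1 * (effect c).1 + d.2 * (effect c).2 ≤ 0)
    (hlarge : (2 * N + 1) * vnorm u + (2 * N ^ 2 + 3 * N) < vnorm (vecAt π u π.length)) :
    EnablesSemiPosCycle V π q u n := by
  obtain ⟨h₁, h₂, hne⟩ := hd
  have hlarge' : (N + 1) * vnorm u + (2 * N ^ 2 + 3 * N) < vnorm (vecAt π u π.length) :=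
    lt_of_le_of_lt (by gcongr; omega) hlarge
  obtain h₁ | h₁ := h₁.eq_or_lt
  · have hd₂ : 0 < d.2 := by omega
    refine h.enablesSemiPosCycle_of_projHom_rev_nonpos (j := 0) hN (fun r c hc => ?_) hlarge'
    have := hcyc r c hc
    rw [← h₁, zero_mul, zero_add] at this
    exact (projHom_one_apply _).trans_le (nonpos_of_mul_nonpos_right this hd₂)
  obtain h₂ | h₂ := h₂.eq_or_lt
  · refine h.enablesSemiPosCycle_of_projHom_rev_nonpos (j := 1) hN (fun r c hc => ?_) hlarge'
    have := hcyc r c hc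
    rw [← h₂, zero_mul, add_zero] at this
    exact (projHom_zero_apply _).trans_le (nonpos_of_mul_nonpos_right this h₁)
  have := h.vnorm_le_of_forall_dot_nonpos hN ⟨h₁, h₂⟩ hdN hcyc
  nlinarith

end IsRun

end HalfPlane

section Gordan

variable {C : Set Vec2} {N : ℕ} {v w : Vec2}

theorem exists_pos_nsmul_add_nsmul_of_clk (hvN : vnorm v ≤ N) (hwN : vnorm w ≤ N) (hv : 0 < v.2)
    (hw : 0 < w.1) (h : Clk v w) :
    ∃ k l : ℕ, k ≤ 2 * N ∧ l ≤ 2 * N ∧ Pos (k • v + l • w) := by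
  unfold vnorm at hvN hwN
  obtain hv₁ | hv₁ := lt_or_ge 0 v.1
  · exact ⟨1, 0, by omega, by omega, by simpa [Pos] using ⟨hv₁, hv⟩⟩
  obtain hw₂ | hw₂ := lt_or_ge 0 w.2
  · exact ⟨0, 1, by omega, by omega, by simpa [Pos] using ⟨hw, hw₂⟩⟩
  -- Both coordinates of `(w.1 - w.2) • v + (v.2 - v.1) • w` are equal to `v.2 * w.1 - v.1 * w.2`.
  obtain ⟨k, hk⟩ := Int.eq_ofNat_of_zero_le (a := w.1 - w.2) (by omega)
  obtain ⟨l, hl⟩ := Int.eq_ofNat_of_zero_le (a := v.2 - v.1) (by omega)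
  refine ⟨k, l, by omega, by omega, ?_⟩
  simp only [Pos, Prod.fst_add, Prod.snd_add, Prod.smul_fst, Prod.smul_snd]
  simp only [nsmul_eq_mul, ← hk, ← hl]
  unfold Clk at h
  constructor <;> linarith

theorem exists_forall_not_clk (hC : ∀ v ∈ C, vnorm v ≤ N) (hv : ∃ v ∈ C, 0 < v.2) :
    ∃ m ∈ C, 0 < m.2 ∧ ∀ v ∈ C, 0 < v.2 → ¬ Clk m v := by
  have hfin : {v ∈ C | 0 < v.2}.Finite := by
    refine (Set.finite_Icc ((-N, -N) : Vec2) (N, N)).subset fun v hv => ?_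
    have hvN := hC v hv.1
    unfold vnorm at hvN
    simp only [Set.mem_Icc, Prod.le_def]
    omega
  obtain ⟨m, ⟨hm, hm₂⟩, hmax⟩ :=
    Set.exists_max_image _ (fun v : Vec2 => (v.1 : ℚ) / v.2) hfin hv
  refine ⟨m, hm, hm₂, fun v hv hv₂ => ?_⟩
  have hle := hmax v ⟨hv, hv₂⟩
  rw [div_le_div_iff₀ (by exact_mod_cast hv₂) (by exact_mod_cast hm₂)] at hle
  norm_cast at hle
  unfold Clk
  linarith

/-- A planar form of Gordan's theorem of the alternative, with bounded coefficients. -/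
theorem exists_semiPos_forall_dot_nonpos_or_exists_pos (hN : 0 < N) (hC : ∀ v ∈ C, vnorm v ≤ N) :
    (∃ d, SemiPos d ∧ vnorm d ≤ N ∧ ∀ v ∈ C, d.1 * v.1 + d.2 * v.2 ≤ 0) ∨
      ∃ v ∈ C, ∃ w ∈ C, ∃ k l : ℕ, k ≤ 2 * N ∧ l ≤ 2 * N ∧ Pos (k • v + l • w) := by
  refine or_iff_not_imp_right.2 fun hnone => ?_
  obtain hsnd | hsnd := em' (∃ v ∈ C, 0 < v.2)
  · exact ⟨(0, 1), by simp [SemiPos], by simpa [vnorm] using Nat.succ_le_of_lt hN,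
      by simpa using hsnd⟩
  obtain ⟨m, hm, hm₂, hclk⟩ := exists_forall_not_clk hC hsnd
  have hm₁ : m.1 ≤ 0 := not_lt.1 fun hm₁ =>
    hnone ⟨m, hm, m, hm, 1, 0, by omega, by omega, by simpa [Pos] using ⟨hm₁, hm₂⟩⟩
  refine ⟨(m.2, -m.1), ⟨hm₂.le, by simpa using hm₁, .inl hm₂⟩, ?_, fun v hv => ?_⟩
  · simpa [vnorm, max_comm] using hC m hm
  have hnot : ¬ Clk m v := by
    obtain hv₁ | hv₁ := lt_or_ge 0 v.1
    · intro h
      obtain ⟨k, l, hk, hl, hpos⟩ :=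
        exists_pos_nsmul_add_nsmul_of_clk (hC m hm) (hC v hv) hm₂ hv₁ h
      exact hnone ⟨m, hm, v, hv, k, l, hk, hl, hpos⟩
    obtain hv₂ | hv₂ := lt_or_ge 0 v.2
    · exact hclk v hv hv₂
    · unfold Clk
      nlinarith [mul_nonneg_of_nonpos_of_nonpos hm₁ hv₂]
  unfold Clk at hnot
  simp only
  linarith

end Gordan

section PositiveCycles

variable {n N : ℕ} {V : VASS n} {π l : List (Transition n)} {p q r₁ r₂ : Fin n} {u : Vec2}
  {j : Fin 2}

theorem exists_pos_closed_walk {c₁ c₂ : List (Transition n)} {k₁ k₂ : ℕ} (hn : n ≤ N)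
    (hN : n * vassNorm V ≤ N) (hV : ∀ t ∈ l, t ∈ V) (hp : Reach V p r₁) (hr : Reach V r₁ r₂)
    (hp' : Reach V r₂ p) (hc₁ : IsControlCycle l r₁ c₁) (hc₂ : IsControlCycle l r₂ c₂)
    (hk₁ : k₁ ≤ 2 * N) (hk₂ : k₂ ≤ 2 * N) (hpos : Pos (k₁ • effect c₁ + k₂ • effect c₂)) :
    ∃ γ, IsControlWalk p γ p ∧ (∀ t ∈ γ, t ∈ V) ∧
      γ.length ≤ 12 * N ^ 3 + 4 * N ^ 2 + 3 * N ∧ Pos (effect γ) := by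
  obtain ⟨d₁, hd₁, hV₁, hlen₁⟩ := hp.exists_walk_length_le
  obtain ⟨d₂, hd₂, hV₂, hlen₂⟩ := hr.exists_walk_length_le
  obtain ⟨d₃, hd₃, hV₃, hlen₃⟩ := hp'.exists_walk_length_le
  -- Repeating the cycles `K` times outweighs the loss of at most `N` on each connecting path.
  set K := 3 * N + 1
  obtain ⟨hw₁, hVc₁, hlenc₁⟩ := hc₁.flatten_replicate hV (K * k₁)
  obtain ⟨hw₂, hVc₂, hlenc₂⟩ := hc₂.flatten_replicate hV (K * k₂)
  have hlenK : ∀ k, k ≤ 2 * N → K * k * n ≤ 6 * N ^ 3 + 2 * N ^ 2 := fun k hk =>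
    calc K * k * n ≤ K * (2 * N) * N := by gcongr
      _ = 6 * N ^ 3 + 2 * N ^ 2 := by ring
  refine ⟨_, hd₁.append (hw₁.append (hd₂.append (hw₂.append hd₃))), ?_, ?_, ?_⟩
  · simp only [List.mem_append]
    rintro t (h | h | h | h | h)
    exacts [hV₁ t h, hVc₁ t h, hV₂ t h, hVc₂ t h, hV₃ t h]
  · simp only [List.length_append]
    have := hlenK k₁ hk₁
    have := hlenK k₂ hk₂
    omega
  · rw [pos_iff_forall_projHom] at hpos ⊢
    intro i
    have hge : ∀ {d}, (∀ t ∈ d, t ∈ V) → d.length ≤ n → -(N : ℤ) ≤ projHom i (effect d) :=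
      fun hd hlen => (neg_le_neg (by exact_mod_cast hN)).trans
        (neg_mul_vassNorm_le_projHom_effect hd hlen i)
    simp only [effect_append, effect_flatten_replicate, ← smul_smul]
    calc (0 : ℤ) < -N + (-N + -N) + K := by push_cast [K]; linarith
      _ ≤ projHom i (effect d₁) + (projHom i (effect d₂) + projHom i (effect d₃)) +
          K * projHom i (k₁ • effect c₁ + k₂ • effect c₂) := by
        gcongr
        exacts [hge hV₁ hlen₁, hge hV₂ hlen₂, hge hV₃ hlen₃,
          le_mul_of_one_le_right (by positivity) (hpos i)]
      _ = projHom i (effect d₁ + (K • k₁ • effect c₁ + (effect d₂ +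
          (K • k₂ • effect c₂ + effect d₃)))) := by
        rw [← nsmul_eq_mul, ← map_nsmul, ← map_add, ← map_add, ← map_add, smul_add]
        congr 1
        abel

/-- Walks in the control graph in which the `j`-th counter is kept in the vertices: the edge
`(t, y)` is the transition `t` fired with counter value `y`. -/
abbrev IsCounterWalk (j : Fin 2) :
    Fin n × ℤ → List (Transition n × ℤ) → Fin n × ℤ → Prop :=
  IsWalk (fun e => (e.1.1, e.2)) (fun e => (e.1.2.2, e.2 + projHom j e.1.2.1))

theorem IsControlWalk.exists_isCounterWalk (h : IsControlWalk p l q) (j : Fin 2) (u : Vec2) :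
    ∃ c, IsCounterWalk j (p, projHom j u) c (q, projHom j (vecAt l u l.length)) ∧
      c.map Prod.fst = l ∧ ∀ e ∈ c, ∃ i < l.length,
        e.1.1 = stateAt l p i ∧ e.2 = projHom j (vecAt l u i) := by
  induction l generalizing p u with
  | nil => exact ⟨[], by simpa [IsWalk, vecAt_zero] using h, rfl, by simp⟩
  | cons t l ih =>
    obtain ⟨rfl, hl⟩ := h
    obtain ⟨c, hc, hmap, hmem⟩ := ih hl (u + t.2.1)
    refine ⟨(t, projHom j u) :: c, ⟨rfl, ?_⟩, by rw [List.map_cons, hmap], ?_⟩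
    · rw [map_add] at hc
      rwa [List.length_cons, vecAt_cons_succ]
    · rintro e he
      obtain rfl | he := List.mem_cons.1 he
      · exact ⟨0, by simp, by rw [stateAt_zero], by rw [vecAt_zero]⟩
      · obtain ⟨i, hi, hstate, hvec⟩ := hmem e he
        exact ⟨i + 1, by simpa using hi, by rw [stateAt_cons_succ, hstate],
          by rw [vecAt_cons_succ, hvec]⟩

namespace IsCounterWalk

variable {x y : Fin n × ℤ} {c : List (Transition n × ℤ)}

theorem isControlWalk (h : IsCounterWalk j x c y) : IsControlWalk x.1 (c.map Prod.fst) y.1 := by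
  induction c generalizing x with
  | nil => exact congrArg Prod.fst h
  | cons e c ih => exact ⟨congrArg Prod.fst h.1, ih h.2⟩

theorem snd_eq (h : IsCounterWalk j x c y) :
    y.2 = x.2 + projHom j (effect (c.map Prod.fst)) := by
  induction c generalizing x with
  | nil => simpa [effect_nil] using (congrArg Prod.snd h).symm
  | cons e c ih => rw [ih h.2, List.map_cons, effect_cons, map_add, ← h.1, add_assoc]

theorem jEnabled (h : IsCounterWalk j x c y) (hc : ∀ e ∈ c, 0 ≤ e.2) (hy : 0 ≤ y.2)
    (hu : projHom j u = x.2) : JEnabled (c.map Prod.fst) x.1 u j := by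
  refine ⟨h.isControlWalk.startsAt, fun i hi => ?_⟩
  change 0 ≤ projHom j (u + effect ((c.map Prod.fst).take i))
  rw [map_add, hu, ← List.map_take]
  obtain hi | rfl := (List.length_map (as := c) Prod.fst ▸ hi).lt_or_eq
  · rw [← snd_eq (h.split_at hi).1]
    exact hc _ (List.getElem_mem hi)
  · rwa [List.take_length, ← snd_eq h]

end IsCounterWalk

namespace IsRun

theorem enablesSemiPosCycle_of_projHom_rev_lt (h : IsRun V π q u) {B : ℕ}
    (hj : ∀ i ≤ π.length, (n * B * vassNorm V : ℤ) ≤ projHom j (vecAt π u i))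
    (hrev : ∀ i ≤ π.length, projHom j.rev (vecAt π u i) < B)
    (hlarge : projHom j u + n * B * vassNorm V < projHom j (vecAt π u π.length)) :
    EnablesSemiPosCycle V π q u (n * B) := by
  obtain ⟨l, hl, hmap, hmem⟩ := h.isControlWalk.exists_isCounterWalk j.rev u
  have hF : ∀ e ∈ l, (e.1.1, e.2) ∈ Finset.univ ×ˢ Finset.Ico (0 : ℤ) B := by
    intro e he
    obtain ⟨i, hi, -, hvec⟩ := hmem e he
    simpa [hvec] using ⟨h.projHom_nonneg j.rev hi.le, hrev i hi.le⟩
  have hsum : (Finset.univ ×ˢ Finset.Ico (0 : ℤ) B : Finset (Fin n × ℤ)).card • (vassNorm V : ℤ) <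
      (l.map fun e => projHom j e.1.2.1).sum := by
    have heffect : (l.map fun e => projHom j e.1.2.1).sum = projHom j (effect π) := by
      rw [map_effect, ← hmap, List.map_map, Function.comp_def]
    rw [vecAt_length, map_add] at hlarge
    simpa [heffect] using hlarge
  obtain ⟨x, c, hc, hpos⟩ := hl.exists_shortCycle_pos (w := fun e => projHom j e.1.2.1) hF
    (Nat.cast_nonneg _)
    (fun e he => projHom_le_vassNorm (h.1.1 e.1 (hmap ▸ List.mem_map_of_mem he)) j) hsum
  obtain ⟨e, he, rfl⟩ := hc.exists_src_eq
  obtain ⟨i, hi, hstate, hvec⟩ := hmem e he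
  have hwalk := IsCounterWalk.isControlWalk hc.isWalk
  have hV : ∀ t ∈ c.map Prod.fst, t ∈ V := fun t ht =>
    h.1.1 t (hmap ▸ List.map_subset _ hc.subset ht)
  have hlen : (c.map Prod.fst).length ≤ n * B := by simpa using hc.length_le
  have hflat : projHom j.rev (effect (c.map Prod.fst)) = 0 := by
    simpa using IsCounterWalk.snd_eq hc.isWalk
  have hnonneg : ∀ e ∈ c, 0 ≤ e.2 := fun e he =>
    (Finset.mem_Ico.1 (Finset.mem_product.1 (hF e (hc.subset he))).2).1
  have hrevEnabled : JEnabled (c.map Prod.fst) e.1.1 (vecAt π u i) j.rev :=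
    IsCounterWalk.jEnabled hc.isWalk hnonneg (hvec ▸ h.projHom_nonneg _ hi.le) hvec.symm
  have hjEnabled : JEnabled (c.map Prod.fst) e.1.1 (vecAt π u i) j :=
    jEnabled_of_length_mul_le hwalk.startsAt hV
      (le_trans (by exact_mod_cast Nat.mul_le_mul_right _ hlen) (hj i hi.le))
  rw [hstate] at hwalk hjEnabled hrevEnabled
  exact .of_isControlWalk hi.le hwalk hV hlen j hjEnabled hrevEnabled
    (by simpa [map_effect, Function.comp_def] using hpos) hflat.ge

theorem enablesSemiPosCycle_of_forall_projHom_rev_lt (h : IsRun V π q u) {B : ℕ}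
    (hsmall : ∀ j, ∀ i ≤ π.length, (B : ℤ) ≤ projHom j (vecAt π u i) →
      projHom j.rev (vecAt π u i) < B)
    (hlarge : vnorm u + 2 * (n * B * vassNorm V) + B + vassNorm V <
      vnorm (vecAt π u π.length)) : EnablesSemiPosCycle V π q u (n * B) := by
  obtain ⟨j, htarget⟩ := exists_projHom_eq_vnorm (h.2.2 _ le_rfl)
  have hu := projHom_le_vnorm j u
  have hdrift : (0 : ℤ) ≤ n * B * vassNorm V := by positivity
  zify at hlarge
  obtain ⟨k, hk, hle, hge⟩ := h.exists_drop_forall_le j (B := n * B * vassNorm V + B)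
    (by linarith)
  refine .of_drop hk ((h.drop hk).enablesSemiPosCycle_of_projHom_rev_lt
    (fun i hi => le_trans (by linarith) (hge i hi)) (fun i hi => ?_) ?_)
  · have hB := hge i hi
    rw [List.length_drop] at hi
    rw [vecAt_drop] at hB ⊢
    exact hsmall j (k + i) (by omega) (le_trans (by linarith) hB)
  · have hsource : projHom j (vecAt π u k) ≤
        vnorm u + (n * B * vassNorm V + B + vassNorm V) :=
      hle.trans (max_le (by linarith) (by linarith))
    rw [vecAt_drop_length π u hk, htarget]
    linarith

theorem enablesSemiPosCycle_of_forall_exists_pos (h : IsRun V π q u) {L : ℕ}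
    (hcyc : ∀ i ≤ π.length, ∃ γ, IsControlWalk (stateAt π q i) γ (stateAt π q i) ∧
      (∀ t ∈ γ, t ∈ V) ∧ γ.length ≤ L ∧ Pos (effect γ))
    (hlarge : vnorm u + 2 * (n * (L * vassNorm V) * vassNorm V) + L * vassNorm V + vassNorm V <
      vnorm (vecAt π u π.length)) :
    EnablesSemiPosCycle V π q u (n * (L * vassNorm V) + L) := by
  by_contra hnone
  refine hnone ((h.enablesSemiPosCycle_of_forall_projHom_rev_lt
    (fun j i hi hj => lt_of_not_ge fun hrev => hnone ?_) hlarge).mono (Nat.le_add_right _ _))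
  obtain ⟨γ, hγ, hV, hlen, hpos⟩ := hcyc i hi
  rw [pos_iff_forall_projHom] at hpos
  have hen : ∀ {j}, ((L * vassNorm V : ℕ) : ℤ) ≤ projHom j (vecAt π u i) →
      JEnabled γ (stateAt π q i) (vecAt π u i) j := fun hj =>
    jEnabled_of_length_mul_le hγ.startsAt hV
      (le_trans (by exact_mod_cast Nat.mul_le_mul_right _ hlen) hj)
  exact .of_isControlWalk hi hγ hV (hlen.trans (Nat.le_add_left _ _)) j (hen hj) (hen hrev)
    (hpos j) (hpos j.rev).le

end IsRun

end PositiveCycles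

section SemiPositiveCycles

variable {n N : ℕ} {V : VASS n} {π : List (Transition n)} {q r₁ r₂ : Fin n} {u : Vec2}

namespace IsRun

theorem exists_halfPlane_or_exists_pos (h : IsRun V π q u) (hpos : 0 < N)
    (hN : n * vassNorm V ≤ N) :
    (∃ d, SemiPos d ∧ vnorm d ≤ N ∧
      ∀ r c, IsControlCycle π r c → d.1 * (effect c).1 + d.2 * (effect c).2 ≤ 0) ∨
    ∃ r₁ c₁ r₂ c₂, IsControlCycle π r₁ c₁ ∧ IsControlCycle π r₂ c₂ ∧
      ∃ k₁ ≤ 2 * N, ∃ k₂ ≤ 2 * N, Pos (k₁ • effect c₁ + k₂ • effect c₂) := by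
  have hnorm : ∀ v ∈ {v | ∃ r c, IsControlCycle π r c ∧ effect c = v}, vnorm v ≤ N := by
    rintro _ ⟨r, c, hc, rfl⟩
    exact (hc.vnorm_effect_le h.1.1).trans hN
  obtain ⟨d, hd, hdN, hdot⟩ |
      ⟨_, ⟨r₁, c₁, hc₁, rfl⟩, _, ⟨r₂, c₂, hc₂, rfl⟩, k₁, k₂, hk₁, hk₂, hk⟩ :=
    exists_semiPos_forall_dot_nonpos_or_exists_pos hpos hnorm
  · exact .inl ⟨d, hd, hdN, fun r c hc => hdot _ ⟨r, c, hc, rfl⟩⟩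
  · exact .inr ⟨r₁, c₁, r₂, c₂, hc₁, hc₂, k₁, hk₁, k₂, hk₂, hk⟩

theorem enablesSemiPosCycle_of_pos_nsmul_add_nsmul {c₁ c₂ : List (Transition n)} {k₁ k₂ L : ℕ}
    (h : IsRun V π q u)
    (hreach : ∀ i ≤ π.length, ∀ j ≤ π.length, Reach V (stateAt π q i) (stateAt π q j))
    (hn : n ≤ N) (hN : n * vassNorm V ≤ N) (hc₁ : IsControlCycle π r₁ c₁)
    (hc₂ : IsControlCycle π r₂ c₂) (hk₁ : k₁ ≤ 2 * N) (hk₂ : k₂ ≤ 2 * N)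
    (hpos : Pos (k₁ • effect c₁ + k₂ • effect c₂)) (hL : 12 * N ^ 3 + 4 * N ^ 2 + 3 * N ≤ L)
    (hlarge : vnorm u + (2 * (L * N ^ 2) + L * N + N) < vnorm (vecAt π u π.length)) :
    EnablesSemiPosCycle V π q u (L * N + L) := by
  have hM : vassNorm V ≤ N := vassNorm_le_of_mul_le q hN
  have hLN : n * (L * vassNorm V) ≤ L * N :=
    calc n * (L * vassNorm V) = L * (n * vassNorm V) := by ring
      _ ≤ L * N := by gcongr
  obtain ⟨i₁, hi₁, rfl⟩ := hc₁.exists_stateAt_eq h.isControlWalk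
  obtain ⟨i₂, hi₂, rfl⟩ := hc₂.exists_stateAt_eq h.isControlWalk
  refine (h.enablesSemiPosCycle_of_forall_exists_pos (L := L) (fun i hi => ?_) ?_).mono
    (by gcongr)
  · obtain ⟨γ, hγ, hV, hlen, hγpos⟩ := exists_pos_closed_walk hn hN h.1.1 (hreach i hi i₁ hi₁.le)
      (hreach i₁ hi₁.le i₂ hi₂.le) (hreach i₂ hi₂.le i hi) hc₁ hc₂ hk₁ hk₂ hpos
    exact ⟨γ, hγ, hV, hlen.trans hL, hγpos⟩
  · refine lt_of_le_of_lt ?_ hlarge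
    calc vnorm u + 2 * (n * (L * vassNorm V) * vassNorm V) + L * vassNorm V + vassNorm V
        ≤ vnorm u + 2 * (L * N * N) + L * N + N := by gcongr
      _ = vnorm u + (2 * (L * N ^ 2) + L * N + N) := by ring

theorem vassNorm_pos_of_vnorm_lt (h : IsRun V π q u) (hlt : vnorm u < vnorm (vecAt π u π.length)) :
    0 < vassNorm V := by
  by_contra! hM
  rw [vecAt_length] at hlt
  have hadd := vnorm_add_le u (effect π)
  have heffect := vnorm_effect_le h.1.1
  rw [Nat.le_zero.1 hM, mul_zero] at heffect
  omega

end IsRun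

theorem mul_add_lt_of_mul_add_one_lt {a b x y P : ℕ} (h : P * (x + 1) < y) (ha : a ≤ P)
    (hb : b ≤ P) : a * x + b < y :=
  lt_of_le_of_lt (by rw [mul_add_one]; gcongr) h

end SemiPositiveCycles

/-- There is a polynomial `Q` with natural coefficients such
that every run of a 2-VASS `V` (with `n` states and norm `M`) staying within a
single SCC, whose target norm exceeds `Q(nM)·(source norm + 1)`, contains a
configuration enabling a semi-positive cycle of length at most `Q(nM)`. -/
theorem scc_semipositive_cycle :
    ∃ Qp : Polynomial ℕ,
      ∀ (n : ℕ) (V : VASS n) (π : List (Transition n)) (q : Fin n) (u : Vec2)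
        (S : Set (Fin n)),
        IsSCC V S → IsRun V π q u →
        (∀ i ≤ π.length, stateAt π q i ∈ S) →
        Qp.eval (n * vassNorm V) * (vnorm u + 1) < vnorm (vecAt π u π.length) →
        ∃ i ≤ π.length, ∃ γ : List (Transition n),
          IsCycle V γ ∧ Enabled γ (stateAt π q i) (vecAt π u i) ∧
          SemiPos (effect γ) ∧ γ.length ≤ Qp.eval (n * vassNorm V) := by
  refine ⟨(2 * .X ^ 2 + .X + 1) * (12 * .X ^ 3 + 4 * .X ^ 2 + 3 * .X) +
    (2 * .X ^ 2 + 3 * .X + 1), ?_⟩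
  intro n V π q u S hS hrun hmem hlarge
  obtain ⟨N, hN⟩ : ∃ N, N = n * vassNorm V := ⟨_, rfl⟩
  obtain ⟨L, hL⟩ : ∃ L, 12 * N ^ 3 + 4 * N ^ 2 + 3 * N = L := ⟨_, rfl⟩
  simp only [← hN, Polynomial.eval_add, Polynomial.eval_mul, Polynomial.eval_pow,
    Polynomial.eval_X, Polynomial.eval_one, Polynomial.eval_ofNat, hL] at hlarge ⊢
  have hlt {a b : ℕ} := mul_add_lt_of_mul_add_one_lt (a := a) (b := b) hlarge
  have hM : 0 < vassNorm V := hrun.vassNorm_pos_of_vnorm_lt <| by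
    simpa using hlt (a := 1) (b := 0) (by nlinarith) (by nlinarith)
  have hn : n ≤ N := hN ▸ Nat.le_mul_of_pos_right n hM
  have hreach : ∀ i ≤ π.length, ∀ j ≤ π.length, Reach V (stateAt π q i) (stateAt π q j) :=
    fun i hi j hj => hS.2.1 _ (hmem i hi) _ (hmem j hj)
  obtain ⟨d, hd, hdN, hdot⟩ | ⟨r₁, c₁, r₂, c₂, hc₁, hc₂, k₁, hk₁, k₂, hk₂, hpos⟩ :=
    hrun.exists_halfPlane_or_exists_pos (q.pos.trans_le hn) hN.ge
  · exact (hrun.enablesSemiPosCycle_of_halfPlane hN.ge hd hdN hdot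
      (hlt (by nlinarith) (by nlinarith))).mono (by nlinarith)
  · exact (hrun.enablesSemiPosCycle_of_pos_nsmul_add_nsmul hreach hn hN.ge hc₁ hc₂ hk₁ hk₂ hpos
      hL.le (one_mul (vnorm u) ▸ hlt (by nlinarith) (by nlinarith))).mono (by nlinarith)
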